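/- Let X ⊆ ℝ^n be nonempty, compact and convex and suppose V_α is differentiable with L_1^{V_α}-Lipschitz gradient on X. Let the iterates satisfy x_{k+1} = Π_X[x_k − γ_k(∇V_α(x_k) + e_k)] with x_0 ∈ X, error vectors e_k ∈ ℝ^n, and a non-increasing stepsize sequence with 0 < γ_k ≤ γ_0 < 1/L_1^{V_α}. Then for every k, V_α(x_{k+1}) ≤ V_α(x_k) − (1 − L_1^{V_α}γ_k)(γ_k/4)‖G_{1/γ_0}(x_k)‖² + (1 − (L_1^{V_α}γ_k)/2) γ_k ‖e_k‖². -/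

import Mathlib

/-!
Write an inexact step as `x - γ • s`, where `s` is the gradient mapping along `∇f x + e`. The
obtuse-angle characterization of the projection gives `‖s‖² ≤ ⟪∇f x + e, s⟫`, so the descent
lemma and Young's inequality for `⟪e, s⟫` yield
`f (x - γ • s) ≤ f x - γ / 2 * (1 - L * γ) * ‖s‖² + γ / 2 * ‖e‖²`. Since the gradient mapping is
nonexpansive in its direction, the exact gradient mapping has squared norm at most
`2 * ‖s‖² + 2 * ‖e‖²`; and since its norm is antitone in the stepsize, it may be evaluated at any
stepsize larger than `γ`.
-/

noncomputable section

section MetricProjection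

open scoped RealInnerProductSpace

variable {E : Type*} [NormedAddCommGroup E]

/-- `P` is a metric projection onto `X`: it sends each point to a nearest point of `X`, for
the distance of the norm. This is a predicate on maps rather than a chosen map. -/
def IsMetricProjection (X : Set E) (P : E → E) : Prop :=
  ∀ z, P z ∈ X ∧ ∀ w ∈ X, ‖z - P z‖ ≤ ‖z - w‖

variable [InnerProductSpace ℝ E]

/-- The gradient mapping (projected-gradient residual) at `x` along the direction `g`: for
`γ ≠ 0`, the vector `s` such that the projected step `P (x - γ • g)` equals `x - γ • s`. It is
indexed by the stepsize `γ` instead of its inverse: the residual `G_β(x)` is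
`gradientMapping P β⁻¹ x (∇f x)`. -/
def gradientMapping (P : E → E) (γ : ℝ) (x g : E) : E :=
  γ⁻¹ • (x - P (x - γ • g))

theorem sub_smul_gradientMapping (P : E → E) {γ : ℝ} (hγ : γ ≠ 0) (x g : E) :
    x - γ • gradientMapping P γ x g = P (x - γ • g) := by
  rw [gradientMapping, smul_inv_smul₀ hγ, sub_sub_cancel]

namespace IsMetricProjection

variable {X : Set E} {P : E → E}

theorem inner_sub_sub_nonpos (hP : IsMetricProjection X P) (hX : Convex ℝ X) (z : E) {w : E}
    (hw : w ∈ X) : ⟪z - P z, w - P z⟫ ≤ 0 := by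
  obtain ⟨hmem, hmin⟩ := hP z
  have : Nonempty X := ⟨⟨P z, hmem⟩⟩
  refine (norm_eq_iInf_iff_real_inner_le_zero hX hmem).1 (le_antisymm ?_ ?_) w hw
  · exact le_ciInf fun v => hmin v v.2
  · exact ciInf_le (f := fun v : X => ‖z - v‖)
      ⟨0, Set.forall_mem_range.2 fun _ => norm_nonneg _⟩ ⟨P z, hmem⟩

theorem sub_smul_gradientMapping_mem (hP : IsMetricProjection X P) {γ : ℝ} (hγ : γ ≠ 0)
    (x g : E) : x - γ • gradientMapping P γ x g ∈ X :=
  sub_smul_gradientMapping P hγ x g ▸ (hP _).1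

theorem inner_sub_gradientMapping_nonneg (hP : IsMetricProjection X P) (hX : Convex ℝ X)
    {γ : ℝ} (hγ : 0 < γ) (x g : E) {w : E} (hw : w ∈ X) :
    0 ≤ ⟪g - gradientMapping P γ x g, w - (x - γ • gradientMapping P γ x g)⟫ := by
  have hvar := hP.inner_sub_sub_nonpos hX (x - γ • g) hw
  rw [← sub_smul_gradientMapping P hγ.ne', sub_sub_sub_cancel_left, ← smul_sub, ← neg_sub g,
    real_inner_smul_left, inner_neg_left] at hvar
  exact nonneg_of_mul_nonneg_right (by linarith) hγ

theorem norm_gradientMapping_sq_le_inner (hP : IsMetricProjection X P) (hX : Convex ℝ X)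
    {γ : ℝ} (hγ : 0 < γ) {x : E} (hx : x ∈ X) (g : E) :
    ‖gradientMapping P γ x g‖ ^ 2 ≤ ⟪g, gradientMapping P γ x g⟫ := by
  have hinner := hP.inner_sub_gradientMapping_nonneg hX hγ x g hx
  rw [sub_sub_cancel, real_inner_smul_right, inner_sub_left, real_inner_self_eq_norm_sq] at hinner
  exact sub_nonneg.1 (nonneg_of_mul_nonneg_right hinner hγ)

theorem norm_gradientMapping_sub_le (hP : IsMetricProjection X P) (hX : Convex ℝ X)
    {γ : ℝ} (hγ : 0 < γ) (x g h : E) :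
    ‖gradientMapping P γ x g - gradientMapping P γ x h‖ ≤ ‖g - h‖ := by
  have hu := hP.inner_sub_gradientMapping_nonneg hX hγ x g
    (hP.sub_smul_gradientMapping_mem hγ.ne' x h)
  have hv := hP.inner_sub_gradientMapping_nonneg hX hγ x h
    (hP.sub_smul_gradientMapping_mem hγ.ne' x g)
  set u := gradientMapping P γ x g
  set v := gradientMapping P γ x h
  rw [sub_sub_sub_cancel_left, ← smul_sub, real_inner_smul_right] at hu hv
  have hfirm : ‖u - v‖ ^ 2 ≤ ⟪g - h, u - v⟫ := by
    have hu' := nonneg_of_mul_nonneg_right hu hγ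
    have hv' := nonneg_of_mul_nonneg_right hv hγ
    rw [← real_inner_self_eq_norm_sq]
    simp only [inner_sub_left, inner_sub_right] at hu' hv' ⊢
    linarith
  have hsq : ‖u - v‖ * ‖u - v‖ ≤ ‖g - h‖ * ‖u - v‖ :=
    sq ‖u - v‖ ▸ hfirm.trans (real_inner_le_norm _ _)
  rcases (norm_nonneg (u - v)).eq_or_lt with hzero | hpos
  · exact hzero ▸ norm_nonneg _
  · exact le_of_mul_le_mul_right hsq hpos

theorem antitoneOn_norm_gradientMapping (hP : IsMetricProjection X P) (hX : Convex ℝ X)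
    (x g : E) : AntitoneOn (fun γ => ‖gradientMapping P γ x g‖) (Set.Ioi 0) := by
  intro a (ha : 0 < a) b (hb : 0 < b) hab
  have hu := hP.inner_sub_gradientMapping_nonneg hX ha x g
    (hP.sub_smul_gradientMapping_mem hb.ne' x g)
  have hv := hP.inner_sub_gradientMapping_nonneg hX hb x g
    (hP.sub_smul_gradientMapping_mem ha.ne' x g)
  change ‖gradientMapping P b x g‖ ≤ ‖gradientMapping P a x g‖
  set u := gradientMapping P a x g
  set v := gradientMapping P b x g
  have hinner : a * ‖u‖ ^ 2 + b * ‖v‖ ^ 2 ≤ (a + b) * ⟪u, v⟫ := by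
    simp only [sub_sub_sub_cancel_left, inner_sub_left, inner_sub_right, real_inner_smul_right,
      real_inner_self_eq_norm_sq, real_inner_comm u v] at hu hv
    linarith
  have hprod : (‖v‖ - ‖u‖) * (b * ‖v‖ - a * ‖u‖) ≤ 0 := by
    linarith [mul_le_mul_of_nonneg_left (real_inner_le_norm u v) (add_pos ha hb).le]
  by_contra! huv
  have hscaled : a * ‖u‖ < b * ‖v‖ := mul_lt_mul' hab huv (norm_nonneg u) hb
  exact hprod.not_gt (mul_pos (sub_pos.2 huv) (sub_pos.2 hscaled))

end IsMetricProjection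

end MetricProjection

section ProjectedGradient

open scoped RealInnerProductSpace

variable {E : Type*} [NormedAddCommGroup E] [InnerProductSpace ℝ E] [CompleteSpace E]
  {X : Set E} {P : E → E} {f : E → ℝ} {f' : E → E} {L : ℝ}

theorem le_add_inner_add_norm_sq_of_gradient_lipschitz {x y : E} (hX : StarConvex ℝ x X)
    (hf : ∀ z ∈ X, HasGradientWithinAt f (f' z) X z)
    (hLip : ∀ z ∈ X, ‖f' z - f' x‖ ≤ L * ‖z - x‖) (hy : y ∈ X) :
    f y ≤ f x + ⟪f' x, y - x⟫ + L / 2 * ‖y - x‖ ^ 2 := by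
  set d := y - x
  let line : ℝ → E := fun t => x + t • d
  have hmem : Set.MapsTo line (Set.Icc 0 1) X := fun t ht => hX.add_smul_sub_mem hy ht.1 ht.2
  have hderiv_line (t : ℝ) : HasDerivAt line d t := by
    simpa [line] using ((hasDerivAt_id t).smul_const d).const_add x
  have hderiv : ∀ t ∈ Set.Icc (0 : ℝ) 1,
      HasDerivWithinAt (f ∘ line) ⟪f' (line t), d⟫ (Set.Icc 0 1) t := fun t ht =>
    (hf _ (hmem ht)).hasFDerivWithinAt.comp_hasDerivWithinAt t
      (hderiv_line t).hasDerivWithinAt hmem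
  let bound : ℝ → ℝ := fun t => f x + t * ⟪f' x, d⟫ + L / 2 * ‖d‖ ^ 2 * t ^ 2
  have hderiv_bound (t : ℝ) : HasDerivAt bound (⟪f' x, d⟫ + L * ‖d‖ ^ 2 * t) t := by
    refine ((((hasDerivAt_id t).mul_const ⟪f' x, d⟫).const_add (f x)).add
      ((hasDerivAt_pow 2 t).const_mul (L / 2 * ‖d‖ ^ 2))).congr_deriv ?_
    ring
  have hderiv_le : ∀ t ∈ Set.Ico (0 : ℝ) 1,
      ⟪f' (line t), d⟫ ≤ ⟪f' x, d⟫ + L * ‖d‖ ^ 2 * t := fun t ht => by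
    rw [← sub_le_iff_le_add', ← inner_sub_left]
    calc ⟪f' (line t) - f' x, d⟫
        ≤ ‖f' (line t) - f' x‖ * ‖d‖ := real_inner_le_norm _ _
      _ ≤ L * ‖line t - x‖ * ‖d‖ := by gcongr; exact hLip _ (hmem (Set.Ico_subset_Icc_self ht))
      _ = L * ‖d‖ ^ 2 * t := by
        rw [add_sub_cancel_left, norm_smul, Real.norm_of_nonneg ht.1]
        ring
  have hle : f (line 1) ≤ bound 1 := image_le_of_deriv_right_le_deriv_boundary
    (fun t ht => (hderiv t ht).continuousWithinAt)
    (fun t ht => (hderiv t (Set.Ico_subset_Icc_self ht)).mono_of_mem_nhdsWithin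
      (Icc_mem_nhdsGE_of_mem ht))
    (by simp [line, bound])
    (fun t _ => (hderiv_bound t).continuousAt.continuousWithinAt)
    (fun t _ => (hderiv_bound t).hasDerivWithinAt) hderiv_le (Set.right_mem_Icc.2 zero_le_one)
  simpa [line, bound, d] using hle

theorem IsMetricProjection.apply_inexact_gradient_step_le (hP : IsMetricProjection X P)
    (hX : Convex ℝ X) (hf : ∀ z ∈ X, HasGradientWithinAt f (f' z) X z) {x : E} (hx : x ∈ X)
    (hLip : ∀ z ∈ X, ‖f' z - f' x‖ ≤ L * ‖z - x‖) {γ : ℝ} (hγ : 0 < γ) (hLγ : L * γ ≤ 1)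
    (e : E) :
    f (P (x - γ • (f' x + e))) ≤ f x
      - (1 - L * γ) * (γ / 4) * ‖gradientMapping P γ x (f' x)‖ ^ 2
      + (1 - L * γ / 2) * γ * ‖e‖ ^ 2 := by
  set s := gradientMapping P γ x (f' x + e) with hs
  set r := gradientMapping P γ x (f' x)
  have hdescent : f (x - γ • s) ≤ f x - γ * ⟪f' x, s⟫ + L / 2 * (γ * ‖s‖) ^ 2 := by
    have hdesc := le_add_inner_add_norm_sq_of_gradient_lipschitz (hX hx) hf hLip
      (hP.sub_smul_gradientMapping_mem hγ.ne' x (f' x + e))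
    rwa [← hs, sub_sub_cancel_left, inner_neg_right, real_inner_smul_right, norm_neg, norm_smul,
      Real.norm_of_nonneg hγ.le, ← sub_eq_add_neg] at hdesc
  have hinner : ‖s‖ ^ 2 ≤ ⟪f' x, s⟫ + ⟪e, s⟫ := by
    rw [← inner_add_left]
    exact hP.norm_gradientMapping_sq_le_inner hX hγ hx (f' x + e)
  have hyoung : ⟪e, s⟫ ≤ (‖e‖ ^ 2 + ‖s‖ ^ 2) / 2 := by
    linarith [real_inner_le_norm e s, two_mul_le_add_sq ‖e‖ ‖s‖]
  have hstep : f (x - γ • s) ≤ f x - γ / 2 * (1 - L * γ) * ‖s‖ ^ 2 + γ / 2 * ‖e‖ ^ 2 := by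
    linarith [mul_le_mul_of_nonneg_left (hinner.trans (add_le_add_right hyoung _)) hγ.le]
  have hresidual : ‖r‖ ^ 2 ≤ 2 * (‖s‖ ^ 2 + ‖e‖ ^ 2) := by
    have hdist : ‖s - r‖ ≤ ‖e‖ := by
      simpa using hP.norm_gradientMapping_sub_le hX hγ x (f' x + e) (f' x)
    calc ‖r‖ ^ 2 ≤ (‖s‖ + ‖e‖) ^ 2 := by
          gcongr
          exact (norm_le_norm_add_norm_sub s r).trans (by gcongr)
      _ ≤ 2 * (‖s‖ ^ 2 + ‖e‖ ^ 2) := add_sq_le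
  rw [← sub_smul_gradientMapping P hγ.ne']
  have hweight : 0 ≤ (1 - L * γ) * (γ / 4) := mul_nonneg (sub_nonneg.2 hLγ) (by positivity)
  linarith [mul_le_mul_of_nonneg_left hresidual hweight]

theorem inexact_projected_gradient_descent_inequality_general (hX : Convex ℝ X)
    (hP : IsMetricProjection X P) (hf : ∀ z ∈ X, HasGradientWithinAt f (f' z) X z)
    (hLip : ∀ u ∈ X, ∀ v ∈ X, ‖f' u - f' v‖ ≤ L * ‖u - v‖) {x e : ℕ → E} {γ : ℕ → ℝ} {γmax : ℝ}
    (hx0 : x 0 ∈ X) (hrec : ∀ k, x (k + 1) = P (x k - γ k • (f' (x k) + e k)))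
    (hγpos : ∀ k, 0 < γ k) (hγmax : ∀ k, γ k ≤ γmax) (hLγ : ∀ k, L * γ k ≤ 1) (k : ℕ) :
    f (x (k + 1)) ≤ f (x k)
      - (1 - L * γ k) * (γ k / 4) * ‖gradientMapping P γmax (x k) (f' (x k))‖ ^ 2
      + (1 - L * γ k / 2) * γ k * ‖e k‖ ^ 2 := by
  have hmem : ∀ j, x j ∈ X
    | 0 => hx0
    | j + 1 => hrec j ▸ (hP _).1
  have hγk := hγpos k
  have hweight : 0 ≤ 1 - L * γ k := sub_nonneg.2 (hLγ k)
  rw [hrec k]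
  refine (hP.apply_inexact_gradient_step_le hX hf (hmem k) (fun z hz => hLip z hz _ (hmem k))
    hγk (hLγ k) (e k)).trans ?_
  gcongr
  exact hP.antitoneOn_norm_gradientMapping hX _ _ hγk (hγk.trans_le (hγmax k)) (hγmax k)

end ProjectedGradient

/-- One-step descent inequality for the inexact projected gradient method on
a compact convex set, for an `L`-smooth objective `V_α`:
`V_α(x_{k+1}) ≤ V_α(x_k) − (1 − Lγ_k)(γ_k/4)‖G_{1/γ_0}(x_k)‖² + (1 − Lγ_k/2)γ_k‖e_k‖²`,
where `G_β(z) = β(z − Π_X[z − β⁻¹∇V_α(z)])` is the projected-gradient residual map. -/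
theorem inexact_projected_gradient_descent_inequality
    {n : ℕ}
    (X : Set (EuclideanSpace ℝ (Fin n)))
    (hXne : X.Nonempty) (hXcpt : IsCompact X) (hXcvx : Convex ℝ X)
    -- `proj` is the Euclidean projection onto `X`
    (proj : EuclideanSpace ℝ (Fin n) → EuclideanSpace ℝ (Fin n))
    (hproj : ∀ z, proj z ∈ X ∧ ∀ w ∈ X, ‖z - proj z‖ ≤ ‖z - w‖)
    (Vα : EuclideanSpace ℝ (Fin n) → ℝ)
    (L : ℝ) (hL : 0 < L)
    -- `V_α` is differentiable with `L`-Lipschitz gradient on `X`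
    (hdiff : ∀ z ∈ X, DifferentiableAt ℝ Vα z)
    (hLip : ∀ u ∈ X, ∀ v ∈ X, ‖gradient Vα u - gradient Vα v‖ ≤ L * ‖u - v‖)
    -- the iterates and the stepsizes
    (x e : ℕ → EuclideanSpace ℝ (Fin n)) (γ : ℕ → ℝ)
    (hx0 : x 0 ∈ X)
    (hrec : ∀ k, x (k + 1) = proj (x k - γ k • (gradient Vα (x k) + e k)))
    (hγpos : ∀ k, 0 < γ k)
    (hγmono : ∀ k, γ (k + 1) ≤ γ k)
    (hγ0 : γ 0 < 1 / L) :
    ∀ k, Vα (x (k + 1)) ≤ Vα (x k)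
      - (1 - L * γ k) * (γ k / 4) *
          ‖(γ 0)⁻¹ • (x k - proj (x k - γ 0 • gradient Vα (x k)))‖ ^ 2
      + (1 - L * γ k / 2) * γ k * ‖e k‖ ^ 2 := by
  have hγ_le (k : ℕ) : γ k ≤ γ 0 := antitone_nat_of_succ_le hγmono k.zero_le
  have hLγ (k : ℕ) : L * γ k ≤ 1 := ((lt_div_iff₀' hL).1 ((hγ_le k).trans_lt hγ0)).le
  exact inexact_projected_gradient_descent_inequality_general hXcvx hproj
    (fun z hz => (hdiff z hz).hasGradientAt.hasFDerivAt.hasFDerivWithinAt) hLip hx0 hrec hγpos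
    hγ_le hLγ
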